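/- Let V be the three-element poset {a,b,c} with a < b, a < c, and b, c incomparable, and let V(n) := V × [n] be the product of V with the n-element chain, equipped with the product order. For all integers n ≥ 1 and m ≥ 0, the number of weakly order-preserving maps π : V(n) → {0, 1, …, m} equals (∏_{i=1}^{n}(m+1+i) · ∏_{i=1}^{2n}(2m+i+1)) / ((n+1)!·(2n+1)!); equivalently, this number multiplied by (n+1)!·(2n+1)! equals ∏_{i=1}^{n}(m+1+i) · ∏_{i=1}^{2n}(2m+i+1). -/

import Mathlib

/-- The three letters of a Kreweras word. -/
inductive KLetter : Type
  | A | B | C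
deriving DecidableEq, Repr

open KLetter

/-- `w` is a Kreweras word of length `3 * n`: it has `n` `A`'s, `n` `B`'s, `n` `C`'s,
and every prefix has at least as many `A`'s as `B`'s and at least as many `A`'s as `C`'s. -/
def IsKrewerasWord (n : ℕ) (w : List KLetter) : Prop :=
  w.length = 3 * n ∧ w.count A = n ∧ w.count B = n ∧ w.count C = n ∧
  ∀ k : ℕ, (w.take k).count B ≤ (w.take k).count A ∧
           (w.take k).count C ≤ (w.take k).count A

/-- `kiota w` is the smallest index `ι ≥ 1` (1-indexed) such that the prefix of
length `ι` of `w` has equally many `A`'s as `B`'s, or equally many `A`'s as `C`'s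
(and `0` if no such index exists). -/
def kiota (w : List KLetter) : ℕ :=
  (((List.range (w.length + 1)).filter fun k =>
      decide (1 ≤ k) &&
      (((w.take k).count A == (w.take k).count B) ||
       ((w.take k).count A == (w.take k).count C))).headD 0)

/-- Promotion of a Kreweras word:
`pro w = (w₂, …, w_{ι-1}, A, w_{ι+1}, …, w_{3n}, w_ι)` where `ι = kiota w`. -/
def pro (w : List KLetter) : List KLetter :=
  ((w.drop 1).set (kiota w - 2) A) ++ [w.getD (kiota w - 1) A]

/-- The trip permutation `σ_w` of a Kreweras word of length `3 * n`, as a function on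
1-indexed positions: `σ_w i` is the unique element of `{1, …, 3n}` congruent to
`kiota (pro^[i-1] w) + i - 1` modulo `3 * n`. -/
def ksigma (n : ℕ) (w : List KLetter) (i : ℕ) : ℕ :=
  (kiota (pro^[i - 1] w) + i - 2) % (3 * n) + 1

/-- `keps w i` is the letter of `pro^[i-1] w` in (1-indexed) position `kiota (pro^[i-1] w)`. -/
def keps (w : List KLetter) (i : ℕ) : KLetter :=
  (pro^[i - 1] w).getD (kiota (pro^[i - 1] w) - 1) A

/-- The negation swapping `B` and `C` (and fixing `A`). -/
def negL : KLetter → KLetter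
  | A => A
  | B => C
  | C => B

open Classical in
/-- The involution `τ_i` on Kreweras words of length `3 * n`: swap the letters in
(1-indexed) positions `i` and `i + 1` if the result is again a Kreweras word,
and otherwise do nothing. -/
noncomputable def tau (n i : ℕ) (w : List KLetter) : List KLetter :=
  let w' := (w.set (i - 1) (w.getD i A)).set i (w.getD (i - 1) A)
  if IsKrewerasWord n w' then w' else w

/-- `tauDown n j = τ_j ∘ τ_{j-1} ∘ ⋯ ∘ τ_1`. -/
noncomputable def tauDown (n : ℕ) : ℕ → List KLetter → List KLetter
  | 0, w => w
  | j + 1, w => tau n (j + 1) (tauDown n j w)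

/-- `evacAux n j = (tauDown n 1) ∘ (tauDown n 2) ∘ ⋯ ∘ (tauDown n j)`. -/
noncomputable def evacAux (n : ℕ) : ℕ → List KLetter → List KLetter
  | 0, w => w
  | j + 1, w => evacAux n j (tauDown n (j + 1) w)

/-- Evacuation on Kreweras words of length `3 * n`:
`evac = (τ_1) ∘ (τ_2 ∘ τ_1) ∘ ⋯ ∘ (τ_{3n-1} ∘ ⋯ ∘ τ_2 ∘ τ_1)`. -/
noncomputable def evac (n : ℕ) (w : List KLetter) : List KLetter :=
  evacAux n (3 * n - 1) w

/-- `tauAsc n k c = τ_{k+c-1} ∘ ⋯ ∘ τ_{k+1} ∘ τ_k`. -/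
noncomputable def tauAsc (n k : ℕ) : ℕ → List KLetter → List KLetter
  | 0, w => w
  | j + 1, w => tau n (k + j) (tauAsc n k j w)

/-- `evacStarAux n j = (tauAsc n 1 (3n-1)) ∘ (tauAsc n 2 (3n-2)) ∘ ⋯ ∘ (tauAsc n j (3n-j))`. -/
noncomputable def evacStarAux (n : ℕ) : ℕ → List KLetter → List KLetter
  | 0, w => w
  | j + 1, w => evacStarAux n j (tauAsc n (j + 1) (3 * n - (j + 1)) w)

/-- Dual evacuation on Kreweras words of length `3 * n`:
`evac* = (τ_{3n-1} ∘ ⋯ ∘ τ_1) ∘ (τ_{3n-1} ∘ ⋯ ∘ τ_2) ∘ ⋯ ∘ (τ_{3n-1})`. -/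
noncomputable def evacStar (n : ℕ) (w : List KLetter) : List KLetter :=
  evacStarAux n (3 * n - 1) w

/-- The three-element "V"-shaped poset: `a < b`, `a < c`, with `b`, `c` incomparable. -/
inductive VP : Type
  | a | b | c
deriving DecidableEq

instance : PartialOrder VP where
  le x y := x = y ∨ x = VP.a
  le_refl x := Or.inl rfl
  le_trans x y z hxy hyz := by
    rcases hxy with rfl | rfl
    · exact hyz
    · exact Or.inr rfl
  le_antisymm x y hxy hyx := by
    rcases hxy with rfl | rfl
    · rfl
    · rcases hyx with rfl | rfl <;> rfl

/-- The labeling of elements of `V(n) = VP × Fin n` by letters. -/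
def vlabel {n : ℕ} (p : VP × Fin n) : KLetter :=
  match p.1 with
  | VP.a => A
  | VP.b => B
  | VP.c => C

/-- `L` is a linear extension of `V(n) = VP × Fin n` (with the product order):
a list of all elements of `V(n)`, each appearing once, such that `L_i ≤ L_j`
implies `i ≤ j`. -/
def IsLinearExtension (n : ℕ) (L : List (VP × Fin n)) : Prop :=
  L.Nodup ∧ (∀ p : VP × Fin n, p ∈ L) ∧
  ∀ i j : Fin L.length, L.get i ≤ L.get j → (i : ℕ) ≤ (j : ℕ)

/-- A connected Kreweras word: a Kreweras word of length `3 * n` having no proper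
nonempty consecutive substring which is itself a Kreweras word. -/
def ConnectedKrewerasWord (n : ℕ) (w : List KLetter) : Prop :=
  IsKrewerasWord n w ∧
  ∀ (u : List KLetter) (m : ℕ), u <:+: w → u ≠ [] → u ≠ w → ¬ IsKrewerasWord m u


set_option linter.unusedSectionVars false

namespace KN
open PowerSeries

theorem ps_zero {L : Type*} [CommRing L] (a : L⟦X⟧) (h : ∀ M : ℕ, (X : L⟦X⟧) ^ M ∣ a) : a = 0 := by
  ext n
  exact (X_pow_dvd_iff.1 (h (n+1))) n (Nat.lt_succ_self n)

section Phi
variable {R L : Type*} [CommRing R] [CommRing L]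

/-- partial sums of the substitution -/
noncomputable def psum (α : R →+* L⟦X⟧) (t : L⟦X⟧) (a : R⟦X⟧) (M : ℕ) : L⟦X⟧ :=
  ∑ N ∈ Finset.range M, α (coeff N a) * (X * t) ^ N

noncomputable def PhiFun (α : R →+* L⟦X⟧) (t : L⟦X⟧) (a : R⟦X⟧) : L⟦X⟧ :=
  PowerSeries.mk fun n => coeff n (psum α t a (n+1))

theorem psum_stable (α : R →+* L⟦X⟧) (t : L⟦X⟧) (a : R⟦X⟧) (M K : ℕ) :
    X ^ M ∣ psum α t a (M + K) - psum α t a M := by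
  induction K with
  | zero => simp
  | succ K ih =>
    have : psum α t a (M + (K+1)) - psum α t a M =
      (psum α t a (M + K) - psum α t a M) + α (coeff (M+K) a) * (X * t) ^ (M+K) := by
      rw [← add_assoc, psum, Finset.sum_range_succ, ← psum]; ring
    rw [this]
    refine dvd_add ih (Dvd.dvd.mul_left ?_ _)
    rw [mul_pow, pow_add]
    exact ⟨X ^ K * (t ^ M * t ^ K), by ring⟩

theorem PhiFun_spec (α : R →+* L⟦X⟧) (t : L⟦X⟧) (a : R⟦X⟧) (M : ℕ) :
    X ^ M ∣ PhiFun α t a - psum α t a M := by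
  rw [X_pow_dvd_iff]
  intro n hn
  obtain ⟨K, rfl⟩ := Nat.exists_eq_add_of_le (Nat.succ_le_of_lt hn)
  have := (X_pow_dvd_iff.1 (psum_stable α t a (n+1) K)) n (Nat.lt_succ_self n)
  rw [map_sub] at this ⊢
  rw [PhiFun, coeff_mk]
  rw [Nat.succ_eq_add_one]
  linear_combination -this

theorem Phi_unique (α : R →+* L⟦X⟧) (t : L⟦X⟧) (a : R⟦X⟧) (x : L⟦X⟧)
    (h : ∀ M : ℕ, X ^ M ∣ x - psum α t a M) : PhiFun α t a = x := by
  rw [← sub_eq_zero]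
  apply ps_zero
  intro M
  have := dvd_sub (PhiFun_spec α t a M) (h M)
  simpa using this

theorem psum_eq_eval (α : R →+* L⟦X⟧) (t : L⟦X⟧) (a : R⟦X⟧) (M : ℕ) :
    psum α t a M = (trunc M a).eval₂ α (X * t) := by
  rw [eval₂_trunc_eq_sum_range]; rfl

theorem psum_mul (α : R →+* L⟦X⟧) (t : L⟦X⟧) (a b : R⟦X⟧) (M : ℕ) :
    X ^ M ∣ psum α t a M * psum α t b M - psum α t (a * b) M := by
  simp only [psum_eq_eval]
  rw [← Polynomial.eval₂_mul, ← Polynomial.eval₂_sub]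
  have : (Polynomial.X : Polynomial R) ^ M ∣ trunc M a * trunc M b - trunc M (a * b) := by
    rw [Polynomial.X_pow_dvd_iff]
    intro d hd
    rw [Polynomial.coeff_sub, coeff_trunc, if_pos hd, coeff_mul, Polynomial.coeff_mul, sub_eq_zero]
    apply Finset.sum_congr rfl
    rintro ⟨i, j⟩ hij
    have := Finset.HasAntidiagonal.mem_antidiagonal.1 hij
    simp only at this ⊢
    rw [coeff_trunc, coeff_trunc, if_pos (by omega), if_pos (by omega)]
  obtain ⟨q, hq⟩ := this
  rw [hq, Polynomial.eval₂_mul, Polynomial.eval₂_pow, Polynomial.eval₂_X, mul_pow, mul_assoc]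
  exact Dvd.intro _ rfl

/-- substitution homomorphism -/
noncomputable def Phi (α : R →+* L⟦X⟧) (t : L⟦X⟧) : R⟦X⟧ →+* L⟦X⟧ where
  toFun := PhiFun α t
  map_one' := by
    apply Phi_unique
    intro M
    rcases M with _ | M
    · simp
    · rw [psum, Finset.sum_range_succ']
      simp [coeff_one]
  map_zero' := by
    apply Phi_unique
    intro M
    simp [psum]
  map_add' a b := by
    apply Phi_unique
    intro M
    have := dvd_add (PhiFun_spec α t a M) (PhiFun_spec α t b M)
    have h2 : psum α t (a + b) M = psum α t a M + psum α t b M := by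
      simp [psum, add_mul, Finset.sum_add_distrib]
    rw [h2]
    convert this using 1
    ring
  map_mul' a b := by
    apply Phi_unique
    intro M
    have h1 := PhiFun_spec α t a M
    have h2 := PhiFun_spec α t b M
    have h3 := psum_mul α t a b M
    have : PhiFun α t a * PhiFun α t b - psum α t (a * b) M =
      (PhiFun α t a - psum α t a M) * PhiFun α t b
      + psum α t a M * (PhiFun α t b - psum α t b M)
      + (psum α t a M * psum α t b M - psum α t (a * b) M) := by ring
    rw [this]
    exact dvd_add (dvd_add (h1.mul_right _) (h2.mul_left _)) h3

theorem Phi_spec (α : R →+* L⟦X⟧) (t : L⟦X⟧) (a : R⟦X⟧) (M : ℕ) :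
    X ^ M ∣ Phi α t a - ∑ N ∈ Finset.range M, α (coeff N a) * (X * t) ^ N :=
  PhiFun_spec α t a M

theorem Phi_C (α : R →+* L⟦X⟧) (t : L⟦X⟧) (r : R) : Phi α t (PowerSeries.C r) = α r := by
  apply Phi_unique
  intro M
  rcases M with _ | M
  · simp
  · rw [psum, Finset.sum_range_succ']
    simp [coeff_C]

theorem Phi_X (α : R →+* L⟦X⟧) (t : L⟦X⟧) : Phi α t X = X * t := by
  apply Phi_unique
  intro M
  rcases M with _ | _ | M
  · simp
  · simp [psum]
  · rw [psum, Finset.sum_range_succ', Finset.sum_range_succ']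
    simp [coeff_X]

theorem Phi_constantCoeff (α : R →+* L⟦X⟧) (t : L⟦X⟧) (a : R⟦X⟧) :
    constantCoeff (Phi α t a) = constantCoeff (α (constantCoeff a)) := by
  have := Phi_spec α t a 1
  rw [pow_one, X_dvd_iff] at this
  simpa [sub_eq_zero] using this

theorem Phi_map {R' : Type*} [CommRing R'] (β : R' →+* R) (α : R →+* L⟦X⟧) (t : L⟦X⟧) (a : R'⟦X⟧) :
    Phi α t (PowerSeries.map β a) = Phi (α.comp β) t a := by
  apply Phi_unique
  intro M
  have := Phi_spec (α.comp β) t a M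
  simpa [psum] using this

end Phi
end KN

namespace KN
open Finset

/-- the three subsets encode three lattice paths, the first one weakly above the others -/
def Valid (N : ℕ) (a b c : Finset ℕ) : Prop :=
  ∀ k, k ≤ N → (b.filter (· < k)).card ≤ (a.filter (· < k)).card ∧
    (c.filter (· < k)).card ≤ (a.filter (· < k)).card

noncomputable instance (N : ℕ) (a b c : Finset ℕ) : Decidable (Valid N a b c) := Classical.propDecidable _

theorem filter_full {N : ℕ} {s : Finset ℕ} (hs : s ⊆ range N) : s.filter (· < N) = s :=
  filter_true_of_mem fun _ hx => mem_range.1 (hs hx)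

theorem Valid.le {N : ℕ} {a b c : Finset ℕ} (h : Valid N a b c) (ha : a ⊆ range N)
    (hb : b ⊆ range N) (hc : c ⊆ range N) : b.card ≤ a.card ∧ c.card ≤ a.card := by
  have := h N le_rfl
  rwa [filter_full ha, filter_full hb, filter_full hc] at this

theorem valid_succ_iff {N : ℕ} {a b c a' b' c' : Finset ℕ}
    (ha : a' = a ∨ a' = insert N a) (hb : b' = b ∨ b' = insert N b) (hc : c' = c ∨ c' = insert N c)
    (sa : a ⊆ range N) (sb : b ⊆ range N) (sc : c ⊆ range N) :
    Valid (N+1) a' b' c' ↔ Valid N a b c ∧ b'.card ≤ a'.card ∧ c'.card ≤ a'.card := by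
  have key : ∀ s s' : Finset ℕ, s ⊆ range N → (s' = s ∨ s' = insert N s) →
      s' ⊆ range (N+1) ∧ ∀ k, k ≤ N → s'.filter (· < k) = s.filter (· < k) := by
    intro s s' hs h
    rcases h with rfl | rfl
    · exact ⟨hs.trans (range_subset_range.2 (Nat.le_succ N)), fun _ _ => rfl⟩
    · refine ⟨?_, fun k hk => ?_⟩
      · rw [range_add_one]; exact insert_subset_insert _ hs
      · rw [filter_insert, if_neg (by omega)]
  obtain ⟨a1, a2⟩ := key a a' sa ha
  obtain ⟨b1, b2⟩ := key b b' sb hb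
  obtain ⟨c1, c2⟩ := key c c' sc hc
  constructor
  · intro h
    refine ⟨fun k hk => ?_, h.le a1 b1 c1⟩
    rw [← a2 k hk, ← b2 k hk, ← c2 k hk]
    exact h k (by omega)
  · rintro ⟨h, h'⟩ k hk
    rcases Nat.lt_or_ge N k with h1 | h1
    · obtain rfl : k = N + 1 := by omega
      rwa [filter_full a1, filter_full b1, filter_full c1]
    · rw [a2 k h1, b2 k h1, c2 k h1]
      exact h k h1

section
variable {R : Type*} [CommRing R]

/-- sum over all valid triples -/
noncomputable def vsum (N : ℕ) (g : Finset ℕ → Finset ℕ → Finset ℕ → R) : R :=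
  ∑ a ∈ (range N).powerset, ∑ b ∈ (range N).powerset, ∑ c ∈ (range N).powerset,
    if Valid N a b c then g a b c else 0

theorem vsum_congr (N : ℕ) (g g' : Finset ℕ → Finset ℕ → Finset ℕ → R)
    (h : ∀ a b c, Valid N a b c → b.card ≤ a.card → c.card ≤ a.card → g a b c = g' a b c) :
    vsum N g = vsum N g' := by
  refine sum_congr rfl fun a ha => sum_congr rfl fun b hb => sum_congr rfl fun c hc => ?_
  rw [mem_powerset] at ha hb hc
  split_ifs with hv
  · exact h a b c hv (hv.le ha hb hc).1 (hv.le ha hb hc).2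
  · rfl

theorem vsum_swap (N : ℕ) (g : Finset ℕ → Finset ℕ → Finset ℕ → R) :
    vsum N g = vsum N (fun a b c => g a c b) := by
  unfold vsum
  refine sum_congr rfl fun a ha => ?_
  rw [sum_comm]
  refine sum_congr rfl fun b hb => sum_congr rfl fun c hc => ?_
  have : Valid N a c b ↔ Valid N a b c := by
    unfold Valid
    exact forall_congr' fun k => forall_congr' fun _ => and_comm
  simp only [this]

theorem vsum_succ (N : ℕ) (G : ℕ → ℕ → ℕ → R) :
    vsum (N+1) (fun a b c => G a.card b.card c.card) =
    vsum N (fun a b c =>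
      ∑ e ∈ range 2, ∑ f ∈ range 2, ∑ g ∈ range 2,
        if b.card + f ≤ a.card + e ∧ c.card + g ≤ a.card + e then
          G (a.card + e) (b.card + f) (c.card + g) else 0) := by
  unfold vsum
  rw [range_add_one]
  have hN : N ∉ range N := by simp
  simp only [sum_powerset_insert hN, ← sum_add_distrib]
  refine sum_congr rfl fun a ha => sum_congr rfl fun b hb => sum_congr rfl fun c hc => ?_
  rw [mem_powerset] at ha hb hc
  have na : N ∉ a := fun h => hN (ha h)
  have nb : N ∉ b := fun h => hN (hb h)
  have nc : N ∉ c := fun h => hN (hc h)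
  have V := fun (a' b' c' : Finset ℕ) h1 h2 h3 =>
    valid_succ_iff (a' := a') (b' := b') (c' := c') h1 h2 h3 ha hb hc
  rw [if_congr (V _ _ _ (Or.inl rfl) (Or.inl rfl) (Or.inl rfl)) rfl rfl,
    if_congr (V _ _ _ (Or.inl rfl) (Or.inl rfl) (Or.inr rfl)) rfl rfl,
    if_congr (V _ _ _ (Or.inl rfl) (Or.inr rfl) (Or.inl rfl)) rfl rfl,
    if_congr (V _ _ _ (Or.inl rfl) (Or.inr rfl) (Or.inr rfl)) rfl rfl,
    if_congr (V _ _ _ (Or.inr rfl) (Or.inl rfl) (Or.inl rfl)) rfl rfl,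
    if_congr (V _ _ _ (Or.inr rfl) (Or.inl rfl) (Or.inr rfl)) rfl rfl,
    if_congr (V _ _ _ (Or.inr rfl) (Or.inr rfl) (Or.inl rfl)) rfl rfl,
    if_congr (V _ _ _ (Or.inr rfl) (Or.inr rfl) (Or.inr rfl)) rfl rfl]
  simp only [card_insert_of_notMem na, card_insert_of_notMem nb, card_insert_of_notMem nc]
  by_cases hv : Valid N a b c
  · simp only [hv, true_and, if_true, sum_range_succ, range_zero, sum_empty, add_zero, zero_add]
  · simp [hv]

noncomputable def Ps (u Y Z : R) (N : ℕ) : R :=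
  vsum N fun a b c => u ^ a.card * Y ^ (a.card - b.card) * Z ^ (a.card - c.card)

noncomputable def Bs (u Y : R) (N : ℕ) : R :=
  vsum N fun a b c => if c.card = a.card then u ^ a.card * Y ^ (a.card - b.card) else 0

noncomputable def Ds (u : R) (N : ℕ) : R :=
  vsum N fun a b c => if b.card = a.card ∧ c.card = a.card then u ^ a.card else 0

theorem vsum_add (N : ℕ) (g g' : Finset ℕ → Finset ℕ → Finset ℕ → R) :
    vsum N g + vsum N g' = vsum N (fun a b c => g a b c + g' a b c) := by
  simp only [vsum, ← sum_add_distrib]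
  refine sum_congr rfl fun a ha => sum_congr rfl fun b hb => sum_congr rfl fun c hc => ?_
  split_ifs <;> simp

theorem vsum_mul (N : ℕ) (r : R) (g : Finset ℕ → Finset ℕ → Finset ℕ → R) :
    r * vsum N g = vsum N (fun a b c => r * g a b c) := by
  simp only [vsum, mul_sum]
  refine sum_congr rfl fun a ha => sum_congr rfl fun b hb => sum_congr rfl fun c hc => ?_
  split_ifs <;> simp

theorem Ps_zero (u Y Z : R) : Ps u Y Z 0 = 1 := by
  simp [Ps, vsum, Valid]

theorem map_vsum {S : Type*} [CommRing S] (φ : R →+* S) (N : ℕ)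
    (g : Finset ℕ → Finset ℕ → Finset ℕ → R) :
    φ (vsum N g) = vsum N (fun a b c => φ (g a b c)) := by
  simp only [vsum, map_sum]
  refine sum_congr rfl fun a ha => sum_congr rfl fun b hb => sum_congr rfl fun c hc => ?_
  split_ifs <;> simp

theorem map_Bs {S : Type*} [CommRing S] (φ : R →+* S) (u Y : R) (N : ℕ) :
    φ (Bs u Y N) = Bs (φ u) (φ Y) N := by
  rw [Bs, map_vsum, Bs]
  congr; funext a b c
  split_ifs <;> simp

theorem map_Ds {S : Type*} [CommRing S] (φ : R →+* S) (u : R) (N : ℕ) :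
    φ (Ds u N) = Ds (φ u) N := by
  rw [Ds, map_vsum, Ds]
  congr; funext a b c
  split_ifs <;> simp

theorem Bs_zero (u : R) (N : ℕ) : Bs u 0 N = Ds u N := by
  unfold Bs Ds
  apply vsum_congr
  intro a b c _ hb hc
  by_cases h1 : c.card = a.card
  · by_cases h2 : b.card = a.card
    · simp [h1, h2]
    · have : a.card - b.card ≠ 0 := by omega
      simp [h1, h2, this]
  · simp [h1]

theorem Ps_succ (u Y Z : R) (N : ℕ) :
    Y * Z * Ps u Y Z (N+1) + ((1 + Y) * Bs u Y N + (1 + Z) * Bs u Z N)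
      = (1 + u * Y * Z) * (1 + Y) * (1 + Z) * Ps u Y Z N + Ds u N := by
  have e1 : Bs u Z N = vsum N fun a b c =>
      if b.card = a.card then u ^ a.card * Z ^ (a.card - c.card) else 0 := vsum_swap _ _
  rw [e1]
  unfold Ps Bs Ds
  rw [vsum_succ N (fun A B C => u ^ A * Y ^ (A - B) * Z ^ (A - C))]
  simp only [vsum_mul, vsum_add]
  apply vsum_congr
  intro a b c _ hb hc
  obtain ⟨i, hi⟩ := Nat.exists_eq_add_of_le hb
  obtain ⟨j, hj⟩ := Nat.exists_eq_add_of_le hc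
  generalize a.card = A at *
  generalize b.card = B at *
  generalize c.card = C at *
  simp only [sum_range_succ, range_zero, sum_empty, add_zero, zero_add]
  have x1 : A - B = i := by omega
  have x2 : A - C = j := by omega
  have x3 : A + 1 - B = i + 1 := by omega
  have x4 : A + 1 - C = j + 1 := by omega
  have x5 : A + 1 - (B + 1) = i := by omega
  have x6 : A + 1 - (C + 1) = j := by omega
  have x7 : A - (B + 1) = i - 1 := by omega
  have x8 : A - (C + 1) = j - 1 := by omega
  have y1 : B ≤ A := hb
  have y2 : C ≤ A := hc
  have y3 : B ≤ A + 1 := by omega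
  have y4 : C ≤ A + 1 := by omega
  have y5 : B + 1 ≤ A + 1 := by omega
  have y6 : C + 1 ≤ A + 1 := by omega
  have z1 : B + 1 ≤ A ↔ i ≠ 0 := by omega
  have z2 : C + 1 ≤ A ↔ j ≠ 0 := by omega
  have z3 : B = A ↔ i = 0 := by omega
  have z4 : C = A ↔ j = 0 := by omega
  simp only [x1, x2, x3, x4, x5, x6, x7, x8, y1, y2, y3, y4, y5, y6, z1, z2, z3, z4]
  rcases i with _ | i <;> rcases j with _ | j <;> simp <;> ring

theorem telescope (u Y Z T : R) (hT : T * ((1 + u * Y * Z) * (1 + Y) * (1 + Z)) = Y * Z) (M : ℕ) :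
    ∑ N ∈ range M, T ^ (N+1) * ((1 + Y) * Bs u Y N + (1 + Z) * Bs u Z N - Ds u N)
      = Y * Z - T ^ M * (Y * Z * Ps u Y Z M) := by
  induction M with
  | zero => simp [Ps_zero]
  | succ M ih =>
    rw [sum_range_succ, ih]
    have := Ps_succ u Y Z M
    linear_combination T ^ (M+1) * this + T ^ M * Ps u Y Z M * hT

end
end KN

namespace KN
open PowerSeries

section
variable {k : Type*} [Field k] [CharZero k]

/-- the boundary series -/
noncomputable def fser (u : k) : k⟦X⟧⟦X⟧ :=
  PowerSeries.mk fun N => Nat.casesOn N 0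
    (fun N => PowerSeries.C u * ((1 + X) * Bs (PowerSeries.C u) X N - PowerSeries.C (1/2) * Ds (PowerSeries.C u) N))

theorem coeff_fser_zero (u : k) : coeff 0 (fser u) = 0 := by
  rw [fser, coeff_mk]; rfl

theorem coeff_fser_succ (u : k) (N : ℕ) : coeff (N+1) (fser u) =
    PowerSeries.C u * ((1 + X) * Bs (PowerSeries.C u) X N - PowerSeries.C (1/2) * Ds (PowerSeries.C u) N) := by
  rw [fser, coeff_mk]

theorem main_eq {L : Type*} [CommRing L] (u : k) (α β : k⟦X⟧ →+* L⟦X⟧)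
    (hαβ : ∀ r, α (PowerSeries.C r) = β (PowerSeries.C r)) (t : L⟦X⟧)
    (ht : (X * t) * ((1 + α (PowerSeries.C u) * α X * β X) * (1 + α X) * (1 + β X)) = α X * β X) :
    Phi α t (fser u) + Phi β t (fser u) = α (PowerSeries.C u) * α X * β X := by
  rw [← sub_eq_zero]
  apply ps_zero
  intro M
  have h1 := (pow_dvd_pow X (Nat.le_succ M)).trans (Phi_spec α t (fser u) (M+1))
  have h2 := (pow_dvd_pow X (Nat.le_succ M)).trans (Phi_spec β t (fser u) (M+1))
  rw [Finset.sum_range_succ'] at h1 h2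
  simp only [coeff_fser_succ, coeff_fser_zero, map_zero, zero_mul, add_zero] at h1 h2
  have h3 := telescope (α (PowerSeries.C u)) (α X) (β X) (X * t) ht M
  have h4 : X ^ M ∣ (X * t) ^ M * (α (PowerSeries.C u) * (α X * β X * Ps (α (PowerSeries.C u)) (α X) (β X) M)) :=
    ⟨t ^ M * (α (PowerSeries.C u) * (α X * β X * Ps (α (PowerSeries.C u)) (α X) (β X) M)), by ring⟩
  have h5 : (∑ N ∈ Finset.range M, α (PowerSeries.C u * ((1 + X) * Bs (PowerSeries.C u) X N - PowerSeries.C (1/2) * Ds (PowerSeries.C u) N))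
        * (X * t) ^ (N+1))
      + (∑ N ∈ Finset.range M, β (PowerSeries.C u * ((1 + X) * Bs (PowerSeries.C u) X N - PowerSeries.C (1/2) * Ds (PowerSeries.C u) N))
        * (X * t) ^ (N+1)) = α (PowerSeries.C u) * ∑ N ∈ Finset.range M, (X * t) ^ (N+1) *
        ((1 + α X) * Bs (α (PowerSeries.C u)) (α X) N + (1 + β X) * Bs (α (PowerSeries.C u)) (β X) N - Ds (α (PowerSeries.C u)) N) := by
    rw [← Finset.sum_add_distrib, Finset.mul_sum]
    refine Finset.sum_congr rfl fun N _ => ?_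
    have half : α (PowerSeries.C (1/2)) + α (PowerSeries.C (1/2)) = 1 := by
      rw [← map_add, ← map_add]; norm_num
    simp only [map_mul, map_sub, map_add, map_one, map_Bs, map_Ds, ← hαβ]
    linear_combination (-α (PowerSeries.C u) * Ds (α (PowerSeries.C u)) N * (X * t) ^ (N+1)) * half
  rw [h3] at h5
  have h6 := dvd_sub (dvd_add h1 h2) h4
  convert h6 using 1
  linear_combination h5

theorem split_const (a : k⟦X⟧⟦X⟧) : ∃ g : k⟦X⟧⟦X⟧,
    a = PowerSeries.map (PowerSeries.C : k →+* k⟦X⟧) (PowerSeries.map (constantCoeff) a) + PowerSeries.C X * g := by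
  have : ∀ p : k⟦X⟧, ∃ q : k⟦X⟧, p = PowerSeries.C (constantCoeff p) + X * q := by
    intro p
    have : (X : k⟦X⟧) ∣ p - PowerSeries.C (constantCoeff p) := by
      rw [X_dvd_iff]; simp
    obtain ⟨q, hq⟩ := this
    exact ⟨q, by rw [← hq]; ring⟩
  choose q hq using this
  refine ⟨PowerSeries.mk fun n => q (coeff n a), ?_⟩
  ext1 n
  simp only [map_add, coeff_map, coeff_C_mul, coeff_mk]
  exact hq _

theorem inv_zero (t : k⟦X⟧⟦X⟧) (ht : (X * t : k⟦X⟧⟦X⟧) ≠ 0) (E : k⟦X⟧⟦X⟧)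
    (h : (1 + X) * (PowerSeries.C X * Phi (PowerSeries.C : k⟦X⟧ →+* k⟦X⟧⟦X⟧) t E) =
      (1 + PowerSeries.C X) * (X * Phi (PowerSeries.map (PowerSeries.C : k →+* k⟦X⟧)) t E)) : E = 0 := by
  apply ps_zero
  intro M
  induction M with
  | zero => simp
  | succ M ih =>
    obtain ⟨e, he⟩ := ih
    rw [he, map_mul, map_mul, map_pow, map_pow, Phi_X, Phi_X] at h
    have h2 : (1 + X) * (PowerSeries.C X * Phi (PowerSeries.C : k⟦X⟧ →+* k⟦X⟧⟦X⟧) t e) =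
      (1 + PowerSeries.C X) * (X * Phi (PowerSeries.map (PowerSeries.C : k →+* k⟦X⟧)) t e) := by
      apply mul_left_cancel₀ (pow_ne_zero M ht)
      linear_combination h
    have h3 := congrArg constantCoeff h2
    simp only [map_mul, map_add, map_one, constantCoeff_X, Phi_constantCoeff, constantCoeff_C,
      zero_mul, mul_zero, add_zero, one_mul] at h3
    have h4 : constantCoeff e = 0 := by
      rcases mul_eq_zero.1 h3 with h | h
      · exact absurd h X_ne_zero
      · exact h
    rw [he, pow_succ]
    exact mul_dvd_mul_left _ (X_dvd_iff.2 h4)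

noncomputable def c1 (u : k) : k⟦X⟧ := - (1 + PowerSeries.map constantCoeff (fser u))

theorem coeff_c1_succ (u : k) (N : ℕ) : coeff (N+1) (c1 u) = - (u * Ds u N / 2) := by
  have h : constantCoeff (R := k) (Bs (PowerSeries.C u) X N) = Ds u N := by
    rw [map_Bs, constantCoeff_X, constantCoeff_C, Bs_zero]
  have h' : constantCoeff (R := k) (Ds (PowerSeries.C u) N) = Ds u N := by
    rw [map_Ds, constantCoeff_C]
  have h2 := coeff_fser_succ u N
  rw [c1, map_neg, map_add, coeff_map, h2]
  simp only [map_mul, map_sub, map_add, map_one, constantCoeff_X, constantCoeff_C, h, h', coeff_one]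
  simp
  ring

theorem catalytic (u : k) : ∃ C0 : k⟦X⟧,
    (1 + PowerSeries.C X * fser u) * (PowerSeries.C X - X * (1 + PowerSeries.C X) * (1 + fser u + PowerSeries.C (PowerSeries.C u) * PowerSeries.C X))
    = PowerSeries.map PowerSeries.C (c1 u) * (X * (1 + PowerSeries.C X) * (1 - PowerSeries.C X - PowerSeries.C (PowerSeries.C u) * PowerSeries.C X ^ 2) + PowerSeries.C X ^ 2)
      + PowerSeries.map PowerSeries.C C0 * (PowerSeries.C X * (1 + PowerSeries.C X)) := by
  obtain ⟨g, hg⟩ := split_const (fser u)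
  have hc : PowerSeries.map (PowerSeries.C : k →+* k⟦X⟧) (c1 u) =
    - (1 + PowerSeries.map (PowerSeries.C : k →+* k⟦X⟧) (PowerSeries.map (constantCoeff) (fser u))) := by
    simp [c1]
  set F : k⟦X⟧⟦X⟧ := fser u with hF
  set f0 := PowerSeries.map (PowerSeries.C : k →+* k⟦X⟧) (PowerSeries.map (constantCoeff) F)
  set Y : k⟦X⟧⟦X⟧ := PowerSeries.C X with hY
  set U : k⟦X⟧⟦X⟧ := PowerSeries.C (PowerSeries.C u) with hU
  obtain ⟨g2, hg2⟩ := split_const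
    ((1 + Y * F) - X * ((1 + f0) + (1 + Y) * (g + U)) * (1 + Y * F) - X * (1 + f0) * F
      + (1 + f0) * (Y - X * Y * (1 + U + U * Y)))
  set C0 := PowerSeries.map (constantCoeff) ((1 + Y * F) - X * ((1 + f0) + (1 + Y) * (g + U)) * (1 + Y * F) - X * (1 + f0) * F
      + (1 + f0) * (Y - X * Y * (1 + U + U * Y)))
  refine ⟨C0, ?_⟩
  set c1' := PowerSeries.map (PowerSeries.C : k →+* k⟦X⟧) (c1 u) with hc1'
  set C0' := PowerSeries.map (PowerSeries.C : k →+* k⟦X⟧) C0 with hC0'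
  have hE : (1 + Y * F) * (Y - X * (1 + Y) * (1 + F + U * Y))
      - (c1' * (X * (1 + Y) * (1 - Y - U * Y ^ 2) + Y ^ 2) + C0' * (Y * (1 + Y)))
      = Y ^ 2 * (g2 - C0') := by
    rw [hc]
    linear_combination Y * hg2 - X * (1 + Y) * (1 + Y * F) * hg
  suffices h0 : g2 - C0' = 0 by
    rw [h0, mul_zero, sub_eq_zero] at hE
    exact hE
  have hunit : IsUnit ((1 + U * Y * X) * (1 + Y) * (1 + X) : k⟦X⟧⟦X⟧) := by
    rw [isUnit_iff_constantCoeff, isUnit_iff_constantCoeff]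
    simp [hY]
  obtain ⟨κ, hκ⟩ := hunit
  set t : k⟦X⟧⟦X⟧ := Y * ((κ⁻¹ : (k⟦X⟧⟦X⟧)ˣ) : k⟦X⟧⟦X⟧) with ht
  have hT : (X * t) * ((1 + U * Y * X) * (1 + Y) * (1 + X)) = Y * X := by
    rw [← hκ, ht]
    have := κ.inv_mul
    linear_combination X * Y * this
  have hY0 : Y ≠ 0 := by
    rw [hY]; intro h
    have := C_injective (h.trans (map_zero PowerSeries.C).symm)
    exact X_ne_zero this
  have hT0 : (X * t) ≠ 0 := by
    intro h
    rw [h, zero_mul] at hT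
    exact mul_ne_zero hY0 X_ne_zero hT.symm
  apply inv_zero t hT0
  have hUm : PowerSeries.map (PowerSeries.C : k →+* k⟦X⟧) (PowerSeries.C u) = U := by
    rw [map_C]
  have m := main_eq u (PowerSeries.C : k⟦X⟧ →+* k⟦X⟧⟦X⟧) (PowerSeries.map (PowerSeries.C : k →+* k⟦X⟧))
    (fun r => by rw [map_C]) t (by rw [map_X]; exact hT)
  rw [map_X] at m
  have e1 := congrArg (Phi (PowerSeries.C : k⟦X⟧ →+* k⟦X⟧⟦X⟧) t) hE
  have e2 := congrArg (Phi (PowerSeries.map (PowerSeries.C : k →+* k⟦X⟧)) t) hE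
  have comp : (PowerSeries.map (PowerSeries.C : k →+* k⟦X⟧)).comp (PowerSeries.C : k →+* k⟦X⟧)
      = (PowerSeries.C : k⟦X⟧ →+* k⟦X⟧⟦X⟧).comp (PowerSeries.C : k →+* k⟦X⟧) := by
    ext1 r; simp [map_C]
  simp only [map_mul, map_sub, map_add, map_one, map_pow, Phi_X, hY, hU, Phi_C, map_X, hUm, hc1', hC0',
    Phi_map, comp] at e1 e2 ⊢
  rw [← hF] at m
  simp only [← hY, ← hU] at e1 e2 m hT ⊢
  generalize Phi (PowerSeries.C : k⟦X⟧ →+* k⟦X⟧⟦X⟧) t F = f1 at *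
  generalize Phi (PowerSeries.map (PowerSeries.C : k →+* k⟦X⟧)) t F = f2 at *
  generalize Phi ((PowerSeries.C : k⟦X⟧ →+* k⟦X⟧⟦X⟧).comp (PowerSeries.C : k →+* k⟦X⟧)) t C0 = c0 at *
  generalize Phi ((PowerSeries.C : k⟦X⟧ →+* k⟦X⟧⟦X⟧).comp (PowerSeries.C : k →+* k⟦X⟧)) t (c1 u) = cc at *
  generalize Phi (PowerSeries.C : k⟦X⟧ →+* k⟦X⟧⟦X⟧) t g2 = E1 at *
  generalize Phi (PowerSeries.map (PowerSeries.C : k →+* k⟦X⟧)) t g2 = E2 at *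
  generalize X * t = T at *
  have hq : (1 + U * Y * X : k⟦X⟧⟦X⟧) ≠ 0 := by
    intro h
    have := congrArg constantCoeff h
    simp at this
  apply mul_left_cancel₀ (mul_ne_zero hq (mul_ne_zero hY0 (X_ne_zero (R := k⟦X⟧))))
  obtain rfl : f2 = U * Y * X - f1 := by linear_combination m
  generalize (X : k⟦X⟧⟦X⟧) = Z at *
  linear_combination (1 + U * Y * Z) * Y * (1 + Y) * e2 - (1 + U * Y * Z) * Z * (1 + Z) * e1 +
    (Z * (-(1 + Y * f1) * (1 + f1 + U * Y) - cc * (1 - Y - U * Y ^ 2))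
    - Y * (-(1 + Z * (U * Y * Z - f1)) * (1 + (U * Y * Z - f1) + U * Z) - cc * (1 - Z - U * Z ^ 2))) * hT

theorem main_quad (u : k) (ψ' : k⟦X⟧) (hψ : ((1 + PowerSeries.C u * X ^ 2) * (1 + X) ^ 2) * ψ' = 1) :
    ∃ Θ : k⟦X⟧,
    (2 + PowerSeries.C u * X ^ 3 - 2 * Phi PowerSeries.C (X * ψ') (c1 u) * X) ^ 2 =
      ((1 + PowerSeries.C u * X ^ 2) * (1 + X) ^ 2) * Phi PowerSeries.C (X * ψ') Θ := by
  obtain ⟨C0, h⟩ := catalytic u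
  refine ⟨4 * (C0 + X * (c1 u) ^ 2), ?_⟩
  have hT : (X * (X * ψ')) * ((1 + PowerSeries.C u * X * X) * (1 + X) * (1 + X)) = X * X := by
    linear_combination X * X * hψ
  have m := main_eq u (RingHom.id k⟦X⟧) (RingHom.id k⟦X⟧) (fun _ => rfl) (X * ψ') (by simpa using hT)
  have h' := congrArg (Phi (RingHom.id k⟦X⟧) (X * ψ')) h
  have comp : (RingHom.id k⟦X⟧).comp (PowerSeries.C : k →+* k⟦X⟧) = PowerSeries.C := RingHom.id_comp _
  simp only [map_mul, map_sub, map_add, map_one, map_pow, Phi_X, Phi_C, RingHom.id_apply,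
    Phi_map, comp, map_ofNat] at h' m ⊢
  generalize Phi (RingHom.id k⟦X⟧) (X * ψ') (fser u) = f at *
  generalize Phi PowerSeries.C (X * ψ') C0 = c0 at *
  generalize Phi PowerSeries.C (X * ψ') (c1 u) = cc at *
  have hX : (X : k⟦X⟧) ≠ 0 := X_ne_zero
  have h1X : (1 + X : k⟦X⟧) ≠ 0 := by
    intro h
    have := congrArg constantCoeff h
    simp at this
  generalize (X : k⟦X⟧) = Y at *
  generalize (PowerSeries.C u : k⟦X⟧) = U at *
  apply mul_left_cancel₀ (mul_ne_zero hX h1X)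
  linear_combination 4 * ((1 + U * Y ^ 2) * (1 + Y) ^ 2) * h'
    + (4 * Y ^ 2 * ((1 + Y * f) * (1 + Y) * (1 + f + U * Y) + cc * (1 + Y) * (1 - Y - U * Y ^ 2))
      - 4 * Y * (1 + Y) * cc ^ 2 * Y ^ 2) * hψ - Y ^ 3 * (1 + Y) * (U * Y ^ 2 - 2 * f) * m
end
end KN

namespace KN
open PowerSeries
section
variable {k : Type*} [Field k]

/-- the Euler operator `X d/dX` -/
noncomputable def th (f : k⟦X⟧) : k⟦X⟧ := X * PowerSeries.derivative k f

theorem coeff_th (f : k⟦X⟧) (n : ℕ) : coeff n (th f) = n * coeff n f := by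
  rcases n with _ | n
  · simp [th]
  · rw [th, coeff_succ_X_mul, coeff_derivative]; push_cast; ring

theorem th_mul (f g : k⟦X⟧) : th (f * g) = th f * g + f * th g := by
  simp only [th, Derivation.leibniz, smul_eq_mul]; ring

theorem th_add (f g : k⟦X⟧) : th (f + g) = th f + th g := by
  simp only [th, map_add]; ring

theorem th_sub (f g : k⟦X⟧) : th (f - g) = th f - th g := by
  simp only [th, map_sub]; ring

theorem th_X : th (X : k⟦X⟧) = X := by
  ext n; rw [coeff_th, coeff_X]; split_ifs with h <;> simp [h]

theorem th_C (r : k) : th (PowerSeries.C r) = 0 := by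
  ext n; rw [coeff_th, coeff_C]; split_ifs with h <;> simp [h]

theorem th_pow (f μ : k⟦X⟧) (h : th f = μ * f) (n : ℕ) : th (f ^ n) = n * (μ * f ^ n) := by
  induction n with
  | zero => simpa using th_C (1 : k)
  | succ n ih => rw [pow_succ, th_mul, ih, h]; push_cast; ring

theorem th_dvd (f : k⟦X⟧) (M : ℕ) (h : X ^ M ∣ f) : X ^ M ∣ th f := by
  rw [X_pow_dvd_iff] at h ⊢
  intro n hn
  rw [coeff_th, h n hn, mul_zero]

theorem th_sum (s : Finset ℕ) (F : ℕ → k⟦X⟧) : th (∑ i ∈ s, F i) = ∑ i ∈ s, th (F i) := by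
  simp only [th, map_sum, Finset.mul_sum]

theorem th_Phi (t μ : k⟦X⟧) (h : th (X * t) = μ * (X * t)) (g : k⟦X⟧) :
    th (Phi PowerSeries.C t g) = μ * Phi PowerSeries.C t (th g) := by
  rw [← sub_eq_zero]
  apply ps_zero
  intro M
  have h1 := th_dvd _ M (Phi_spec (PowerSeries.C : k →+* k⟦X⟧) t g M)
  have h2 := (Phi_spec (PowerSeries.C : k →+* k⟦X⟧) t (th g) M).mul_left μ
  have h3 : th (∑ N ∈ Finset.range M, PowerSeries.C (coeff N g) * (X * t) ^ N)
     = μ * ∑ N ∈ Finset.range M, PowerSeries.C (coeff N (th g)) * (X * t) ^ N := by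
    rw [th_sum, Finset.mul_sum]
    refine Finset.sum_congr rfl fun N _ => ?_
    rw [th_mul, th_C, th_pow _ _ h, coeff_th, map_mul, map_natCast]
    ring
  rw [th_sub, h3] at h1
  have := dvd_sub h1 h2
  convert this using 1
  ring

theorem coeff_Phi (ψ ψ' : k⟦X⟧) (hψ : ψ * ψ' = 1) (g W : k⟦X⟧) (N e : ℕ) (he : e ≤ 1) :
    coeff (2 * N + e) (Phi PowerSeries.C (X * ψ') g * (ψ ^ N * W)) =
      ∑ j ∈ Finset.range (N + 1), coeff j g * coeff (2 * (N - j) + e) (ψ ^ (N - j) * W) := by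
  have h1 := (Phi_spec (PowerSeries.C : k →+* k⟦X⟧) (X * ψ') g (2 * N + 2)).mul_right (ψ ^ N * W)
  have h2 := X_pow_dvd_iff.1 h1 (2 * N + e) (by omega)
  rw [sub_mul, map_sub, sub_eq_zero] at h2
  rw [h2, Finset.sum_mul, map_sum]
  symm
  have hterm : ∀ j, PowerSeries.C (coeff j g) * (X * (X * ψ')) ^ j * (ψ ^ N * W)
      = PowerSeries.C (coeff j g) * (X ^ (2 * j) * (ψ' ^ j * ψ ^ N * W)) := by
    intro j
    rw [mul_pow, mul_pow, pow_mul, pow_two, mul_pow]; ring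
  have hsub : Finset.range (N + 1) ⊆ Finset.range (2 * N + 2) :=
    Finset.range_subset_range.2 (by omega)
  rw [← Finset.sum_subset hsub]
  · refine Finset.sum_congr rfl fun j hj => ?_
    have hj' : j ≤ N := by simpa [Nat.lt_succ_iff] using hj
    rw [hterm, coeff_C_mul]
    have hp : ψ' ^ j * ψ ^ N = ψ ^ (N - j) := by
      obtain ⟨i, rfl⟩ := Nat.exists_eq_add_of_le hj'
      rw [Nat.add_sub_cancel_left, pow_add, ← mul_assoc, ← mul_pow, mul_comm ψ' ψ, hψ, one_pow,
        one_mul]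
    rw [hp]
    have : 2 * N + e = (2 * (N - j) + e) + 2 * j := by omega
    rw [this, coeff_X_pow_mul]
  · intro j _ hj
    have hj' : N < j := by simpa using hj
    rw [hterm, coeff_C_mul, coeff_X_pow_mul', if_neg (by omega), mul_zero]

variable [CharZero k]

theorem extraction (u : k) (N : ℕ) :
    ((N + 1 : ℕ) : k) * (u * Ds u N) =
      coeff (2 * N + 3) (((1 + PowerSeries.C u * X ^ 2) * (1 + X) ^ 2) ^ (N + 1))
      - u * coeff (2 * N) (((1 + PowerSeries.C u * X ^ 2) * (1 + X) ^ 2) ^ (N + 1)) := by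
  have hc : constantCoeff (((1 + PowerSeries.C u * X ^ 2) * (1 + X) ^ 2 : k⟦X⟧)) = 1 := by simp
  obtain ⟨ψ', hψ⟩ : ∃ ψ', ((1 + PowerSeries.C u * X ^ 2) * (1 + X) ^ 2 : k⟦X⟧) * ψ' = 1 :=
    ⟨_, PowerSeries.mul_inv_cancel _ (by rw [hc]; exact one_ne_zero)⟩
  obtain ⟨Θ, hΘ⟩ := main_quad u ψ' hψ
  set ψ : k⟦X⟧ := (1 + PowerSeries.C u * X ^ 2) * (1 + X) ^ 2 with hψd
  clear_value ψ
  set c : k⟦X⟧ := Phi PowerSeries.C (X * ψ') (c1 u) with hcd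
  set e : k⟦X⟧ := 2 + PowerSeries.C u * X ^ 3 - 2 * c * X with hed
  set P : k⟦X⟧ := Phi PowerSeries.C (X * ψ') Θ with hP
  have he0 : constantCoeff e = 2 := by
    have : constantCoeff (2 : k⟦X⟧) = 2 := map_ofNat _ 2
    simp [hed, this]
  have hΘ0 : constantCoeff Θ = 4 := by
    have := congrArg constantCoeff hΘ
    rw [map_pow, he0, map_mul, hc, hP, Phi_constantCoeff, constantCoeff_C] at this
    linear_combination -this
  set lam : k⟦X⟧ := 2 - th ψ * ψ' with hlam
  have h1 : th ψ = (2 - lam) * ψ := by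
    rw [hlam]; linear_combination (-th ψ) * hψ
  have h2 : th ψ' = -((2 - lam) * ψ') := by
    have := congrArg th hψ
    rw [th_mul, h1] at this
    have h0 : th (1 : k⟦X⟧) = 0 := by simpa using th_C (1 : k)
    rw [h0] at this
    linear_combination ψ' * this - (th ψ' + (2 - lam) * ψ') * hψ
  have hT : th (X * (X * ψ')) = lam * (X * (X * ψ')) := by
    rw [th_mul, th_mul, th_X, h2]; ring
  set Γ : k⟦X⟧ := th Θ * Θ⁻¹ * PowerSeries.C (1 / 2) with hΓ
  have hΓ0 : coeff 0 Γ = 0 := by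
    rw [coeff_zero_eq_constantCoeff_apply, hΓ, map_mul, map_mul,
      ← coeff_zero_eq_constantCoeff_apply (th Θ), coeff_th]
    simp
  have hhalf : (2 : k⟦X⟧) * PowerSeries.C (1 / 2) = 1 := by
    rw [show (2 : k⟦X⟧) = PowerSeries.C 2 from (map_ofNat _ 2).symm, ← map_mul]; simp
  have hΓΘ : th Θ = 2 * Γ * Θ := by
    have := PowerSeries.mul_inv_cancel Θ (by rw [hΘ0]; norm_num)
    rw [hΓ]
    linear_combination (-2 * th Θ * PowerSeries.C (1 / 2)) * this - th Θ * hhalf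
  set G : k⟦X⟧ := Phi PowerSeries.C (X * ψ') Γ with hG
  have hthP : th P = lam * (2 * G * P) := by
    rw [hP, th_Phi _ _ hT, hΓΘ, map_mul, map_mul, map_ofNat]
  have hene : e ≠ 0 := by
    intro h; rw [h, map_zero] at he0; norm_num at he0
  have hthe : 2 * th e = e * (2 - lam + 2 * lam * G) := by
    apply mul_left_cancel₀ hene
    have := congrArg th hΘ
    rw [pow_two, th_mul, th_mul, h1, hthP] at this
    linear_combination this - (2 - lam + 2 * lam * G) * hΘ
  have hr : ∀ M : ℕ, coeff (2 * M + 1) (ψ ^ M * (e * lam)) = 0 := by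
    intro M
    induction M using Nat.strong_induction_on with
    | _ M ih =>
    have hH : 2 * th (e * ψ ^ M) = 2 * ((2 * M + 1 : ℕ) : k⟦X⟧) * (e * ψ ^ M)
        - ((2 * M + 1 : ℕ) : k⟦X⟧) * (ψ ^ M * (e * lam)) + 2 * (G * (ψ ^ M * (e * lam))) := by
      rw [th_mul, th_pow _ _ h1]
      push_cast
      linear_combination ψ ^ M * hthe
    have hco := congrArg (coeff (2 * M + 1)) hH
    have n1 : ∀ (q : ℕ) (f : k⟦X⟧) (i : ℕ), coeff i ((q : k⟦X⟧) * f) = q * coeff i f := by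
      intro q f i
      rw [← map_natCast (PowerSeries.C : k →+* k⟦X⟧), coeff_C_mul]
    have n2 : ∀ (f : k⟦X⟧) (i : ℕ), coeff i (2 * f) = 2 * coeff i f := by
      intro f i
      exact_mod_cast n1 2 f i
    rw [map_add, map_sub, mul_assoc, n2, n2, n1, n1, n2, coeff_th,
      coeff_Phi ψ ψ' hψ _ _ _ _ le_rfl, Finset.sum_range_succ', hΓ0, zero_mul, add_zero,
      Finset.sum_eq_zero] at hco
    · have h5 : ((2 * M + 1 : ℕ) : k) * coeff (2 * M + 1) (ψ ^ M * (e * lam)) = 0 := by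
        linear_combination hco
      rcases mul_eq_zero.1 h5 with h | h
      · exact absurd h (Nat.cast_ne_zero.2 (by omega))
      · exact h
    · intro j hj
      rw [Finset.mem_range] at hj
      rw [ih (M - (j + 1)) (by omega), mul_zero]
  have hq : ∀ M i : ℕ, (M : k) * coeff i (ψ ^ M * lam) = (2 * M - i) * coeff i (ψ ^ M) := by
    intro M i
    have h := th_pow _ _ h1 M
    have h6 : (M : k⟦X⟧) * (ψ ^ M * lam) = ((2 * M : ℕ) : k⟦X⟧) * ψ ^ M - th (ψ ^ M) := by
      rw [h]; push_cast; ring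
    have h7 := congrArg (coeff i) h6
    rw [← map_natCast (PowerSeries.C : k →+* k⟦X⟧), ← map_natCast (PowerSeries.C : k →+* k⟦X⟧),
      map_sub, coeff_C_mul, coeff_C_mul, coeff_th] at h7
    rw [h7]; push_cast; ring
  have hlam0 : constantCoeff lam = 2 := by
    rw [hlam, map_sub, map_mul, ← coeff_zero_eq_constantCoeff_apply (th ψ), coeff_th]
    have : constantCoeff (2 : k⟦X⟧) = 2 := map_ofNat _ 2
    simp [this]
  have hdiag : ∀ M : ℕ, M ≠ 0 → coeff (2 * M) (ψ ^ M * lam) = 0 := by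
    intro M hM
    have := hq M (2 * M)
    push_cast at this
    rw [sub_self, zero_mul] at this
    rcases mul_eq_zero.1 this with h | h
    · exact absurd h (Nat.cast_ne_zero.2 hM)
    · exact h
  have hcc : coeff (2 * (N + 1) + 0) (c * (ψ ^ (N + 1) * lam)) = 2 * coeff (N + 1) (c1 u) := by
    rw [hcd, coeff_Phi ψ ψ' hψ _ _ _ _ zero_le_one, Finset.sum_range_succ, Finset.sum_eq_zero]
    · simp [hlam0, mul_comm]
    · intro j hj
      rw [Finset.mem_range] at hj
      rw [add_zero, hdiag _ (by omega), mul_zero]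
  rw [add_zero] at hcc
  have hfin := hr (N + 1)
  have hsplit : ψ ^ (N + 1) * (e * lam) = PowerSeries.C 2 * (ψ ^ (N + 1) * lam)
      + PowerSeries.C u * (X ^ 3 * (ψ ^ (N + 1) * lam))
      - PowerSeries.C 2 * (X * (c * (ψ ^ (N + 1) * lam))) := by
    rw [hed, show (PowerSeries.C 2 : k⟦X⟧) = 2 from map_ofNat _ 2]; ring
  rw [hsplit, map_sub, map_add, coeff_C_mul, coeff_C_mul, coeff_C_mul, coeff_succ_X_mul,
    hcc, coeff_c1_succ,
    show 2 * (N + 1) + 1 = 2 * N + 3 by ring, coeff_X_pow_mul] at hfin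
  have g1 := hq (N + 1) (2 * N + 3)
  have g2 := hq (N + 1) (2 * N)
  push_cast at g1 g2 hfin ⊢
  linear_combination ((N + 1 : k) / 2) * hfin - g1 - u / 2 * g2
end
end KN

namespace KN

/-- the subset attached to a monotone sequence -/
def im {n m : ℕ} (f : Fin n → Fin (m + 1)) : Finset ℕ :=
  Finset.univ.image fun i => (f i : ℕ) + i

theorem sh_strictMono {n m : ℕ} {f : Fin n → Fin (m + 1)} (hf : Monotone f) :
    StrictMono fun i => (f i : ℕ) + (i : ℕ) := by
  intro i j hij
  have h1 : (f i : ℕ) ≤ f j := hf hij.le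
  have h2 : (i : ℕ) < j := hij
  simp only
  omega

theorem im_card {n m : ℕ} {f : Fin n → Fin (m + 1)} (hf : Monotone f) : (im f).card = n := by
  rw [im, Finset.card_image_of_injective _ (sh_strictMono hf).injective, Finset.card_univ,
    Fintype.card_fin]

theorem im_subset {n m : ℕ} (f : Fin n → Fin (m + 1)) : im f ⊆ Finset.range (n + m) := by
  intro x hx
  rw [im, Finset.mem_image] at hx
  obtain ⟨i, -, rfl⟩ := hx
  rw [Finset.mem_range]
  have := (f i).2
  have := i.2
  omega

theorem im_count {n m : ℕ} {f : Fin n → Fin (m + 1)} (hf : Monotone f) (k : ℕ) :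
    ((im f).filter (· < k)).card = (Finset.univ.filter fun i => (f i : ℕ) + (i : ℕ) < k).card := by
  rw [im, Finset.filter_image, Finset.card_image_of_injective _ (sh_strictMono hf).injective]

theorem dom_iff {n m : ℕ} {f g : Fin n → Fin (m + 1)} (hf : Monotone f) (hg : Monotone g) :
    (∀ i, f i ≤ g i) ↔ ∀ k, k ≤ n + m →
      ((im g).filter (· < k)).card ≤ ((im f).filter (· < k)).card := by
  simp only [im_count hf, im_count hg]
  constructor
  · intro h k _
    apply Finset.card_le_card
    intro i hi
    rw [Finset.mem_filter] at hi ⊢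
    have : (f i : ℕ) ≤ g i := h i
    exact ⟨Finset.mem_univ _, by omega⟩
  · intro h i
    by_contra hc
    have hc' : (g i : ℕ) < f i := not_le.1 hc
    have h1 := h ((g i : ℕ) + i + 1) (by have := (g i).2; have := i.2; omega)
    have h2 : Finset.Iic i ⊆
        (Finset.univ.filter fun j => (g j : ℕ) + (j : ℕ) < (g i : ℕ) + i + 1) := by
      intro j hj
      rw [Finset.mem_Iic] at hj
      rw [Finset.mem_filter]
      have := (sh_strictMono hg).monotone hj
      exact ⟨Finset.mem_univ _, by omega⟩
    have h3 : (Finset.univ.filter fun j => (f j : ℕ) + (j : ℕ) < (g i : ℕ) + i + 1) ⊆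
        Finset.Iio i := by
      intro j hj
      rw [Finset.mem_filter] at hj
      rw [Finset.mem_Iio]
      by_contra hij
      have := (sh_strictMono hf).monotone (not_lt.1 hij)
      omega
    have h4 := Finset.card_le_card h2
    have h5 := Finset.card_le_card h3
    rw [Fin.card_Iic] at h4
    rw [Fin.card_Iio] at h5
    omega

theorem im_inj {n m : ℕ} {f g : Fin n → Fin (m + 1)} (hf : Monotone f) (hg : Monotone g)
    (h : im f = im g) : f = g := by
  funext i
  apply le_antisymm
  · exact (dom_iff hf hg).2 (fun k _ => by rw [h]) i
  · exact (dom_iff hg hf).2 (fun k _ => by rw [h]) i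

theorem strict_gap {n : ℕ} {o : Fin n → ℕ} (ho : StrictMono o) (d : ℕ) :
    ∀ i j : Fin n, (j : ℕ) = i + d → o i + d ≤ o j := by
  induction d with
  | zero =>
    intro i j h
    obtain rfl : j = i := Fin.ext (by omega)
    simp
  | succ d ih =>
    intro i j h
    have := ih i ⟨i + d, by have := j.2; omega⟩ rfl
    have h2 : o ⟨i + d, by have := j.2; omega⟩ < o j := ho (by rw [Fin.lt_def]; simp only; omega)
    omega

theorem im_surj {n m : ℕ} (s : Finset ℕ) (hs : s ⊆ Finset.range (n + m)) (hc : s.card = n) :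
    ∃ f : Fin n → Fin (m + 1), Monotone f ∧ im f = s := by
  set o : Fin n → ℕ := fun i => s.orderEmbOfFin hc i with ho
  have hom : StrictMono o := (s.orderEmbOfFin hc).strictMono
  have hlt : ∀ i, o i < n + m := fun i => Finset.mem_range.1 (hs (s.orderEmbOfFin_mem hc i))
  have hge : ∀ i : Fin n, (i : ℕ) ≤ o i := by
    intro i
    have := strict_gap hom i ⟨0, by have := i.2; omega⟩ i (by simp)
    omega
  have hle : ∀ i : Fin n, o i ≤ i + m := by
    intro i
    have h1 := i.2
    have := strict_gap hom (n - 1 - i) i ⟨n - 1, by omega⟩ (by simp only; omega)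
    have := hlt ⟨n - 1, by omega⟩
    omega
  refine ⟨fun i => ⟨o i - i, by have := hle i; omega⟩, ?_, ?_⟩
  · intro i j hij
    have hij' : (i : ℕ) ≤ j := hij
    have := strict_gap hom (j - i) i j (by omega)
    rw [Fin.le_def]
    simp only
    omega
  · have : im (fun i => (⟨o i - i, by have := hle i; omega⟩ : Fin (m + 1))) =
        Finset.univ.image o := by
      unfold im
      congr 1
      funext i
      have := hge i
      simp only
      omega
    rw [this]
    ext x
    have hr := Finset.range_orderEmbOfFin s hc
    rw [Finset.mem_image]
    constructor
    · rintro ⟨i, -, rfl⟩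
      exact s.orderEmbOfFin_mem hc i
    · intro hx
      have : x ∈ Set.range (s.orderEmbOfFin hc) := by rw [hr]; exact hx
      obtain ⟨i, rfl⟩ := this
      exact ⟨i, Finset.mem_univ _, rfl⟩

open Finset in
noncomputable def trip (N n : ℕ) : Finset (Finset ℕ × Finset ℕ × Finset ℕ) :=
  ((range N).powerset ×ˢ (range N).powerset ×ˢ (range N).powerset).filter fun t =>
    Valid N t.1 t.2.1 t.2.2 ∧ t.1.card = n ∧ t.2.1.card = n ∧ t.2.2.card = n

theorem coeff_Ds (N n : ℕ) : (Ds (Polynomial.X : Polynomial ℚ) N).coeff n = ((trip N n).card : ℚ) := by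
  rw [trip, Finset.card_filter]
  push_cast
  rw [Finset.sum_product]
  simp only [Finset.sum_product, Ds, vsum, Polynomial.finsetSum_coeff]
  refine Finset.sum_congr rfl fun a _ => Finset.sum_congr rfl fun b _ =>
    Finset.sum_congr rfl fun c _ => ?_
  by_cases h1 : Valid N a b c
  · by_cases h2 : a.card = n
    · subst h2
      by_cases h3 : b.card = a.card ∧ c.card = a.card
      · simp [h1, h3, Polynomial.coeff_X_pow]
      · simp [h1, h3]
    · have h2' : ¬ n = a.card := fun h => h2 h.symm
      by_cases h3 : b.card = a.card ∧ c.card = a.card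
      · simp [h1, h2, h2', h3, Polynomial.coeff_X_pow]
      · simp [h1, h2, h3]
  · simp [h1]

theorem coeff_psi (u : ℚ) (N i : ℕ) :
    PowerSeries.coeff i (((1 + PowerSeries.C u * PowerSeries.X ^ 2) *
      (1 + PowerSeries.X) ^ 2) ^ N) =
    ∑ j ∈ Finset.range (N + 1), u ^ j *
      ((N.choose j : ℚ) * if 2 * j ≤ i then ((2 * N).choose (i - 2 * j) : ℚ) else 0) := by
  rw [mul_pow, add_comm (1 : PowerSeries ℚ), add_pow, Finset.sum_mul, map_sum]
  refine Finset.sum_congr rfl fun j _ => ?_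
  have h1 : ((PowerSeries.C u * PowerSeries.X ^ 2) ^ j * 1 ^ (N - j) * (N.choose j : PowerSeries ℚ)
      * ((1 + PowerSeries.X) ^ 2) ^ N : PowerSeries ℚ) =
      PowerSeries.C (u ^ j * (N.choose j : ℚ)) * (PowerSeries.X ^ (2 * j) *
        (((1 + Polynomial.X) ^ (2 * N) : Polynomial ℚ) : PowerSeries ℚ)) := by
    push_cast
    rw [map_mul, map_pow, map_natCast, ← pow_mul (1 + PowerSeries.X)]
    generalize (1 + PowerSeries.X : PowerSeries ℚ) ^ (2 * N) = q
    ring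
  rw [h1, PowerSeries.coeff_C_mul, PowerSeries.coeff_X_pow_mul', Polynomial.coeff_coe,
    Polynomial.coeff_one_add_X_pow, mul_assoc]

/-- the coefficient polynomial -/
noncomputable def qpoly (N i : ℕ) : Polynomial ℚ :=
  ∑ j ∈ Finset.range (N + 1), Polynomial.C
    ((N.choose j : ℚ) * if 2 * j ≤ i then ((2 * N).choose (i - 2 * j) : ℚ) else 0) * Polynomial.X ^ j

theorem qpoly_coeff (N i j : ℕ) (hj : j ≤ N) (hi : 2 * j ≤ i) :
    (qpoly N i).coeff j = (N.choose j : ℚ) * ((2 * N).choose (i - 2 * j) : ℚ) := by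
  rw [qpoly, Polynomial.finsetSum_coeff, Finset.sum_eq_single j]
  · rw [Polynomial.coeff_C_mul_X_pow, if_pos rfl, if_pos hi]
  · intro b _ hb
    rw [Polynomial.coeff_C_mul_X_pow, if_neg (Ne.symm hb)]
  · intro h
    exact absurd (Finset.mem_range.2 (by omega)) h

theorem poly_eq (N : ℕ) : Polynomial.C ((N + 1 : ℕ) : ℚ) * (Polynomial.X * Ds Polynomial.X N) =
    qpoly (N + 1) (2 * N + 3) - Polynomial.X * qpoly (N + 1) (2 * N) := by
  apply Polynomial.funext
  intro u
  have h := extraction u N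
  have hD : Polynomial.eval u (Ds Polynomial.X N) = Ds u N := by
    have := map_Ds (Polynomial.evalRingHom u) Polynomial.X N
    simpa using this
  have hq : ∀ i, Polynomial.eval u (qpoly (N + 1) i) = PowerSeries.coeff i
      (((1 + PowerSeries.C u * PowerSeries.X ^ 2) * (1 + PowerSeries.X) ^ 2) ^ (N + 1)) := by
    intro i
    rw [coeff_psi, qpoly, Polynomial.eval_finset_sum]
    refine Finset.sum_congr rfl fun j _ => ?_
    rw [Polynomial.eval_mul, Polynomial.eval_C, Polynomial.eval_pow, Polynomial.eval_X, mul_comm]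
  rw [Polynomial.eval_sub, Polynomial.eval_mul, Polynomial.eval_mul, Polynomial.eval_mul,
    Polynomial.eval_C, Polynomial.eval_X, hD, hq, hq, h]

theorem trip_card (n m : ℕ) : ((n + m + 1 : ℕ) : ℚ) * ((trip (n + m) n).card : ℚ) =
    ((n + m + 1).choose (n + 1) : ℚ) * ((2 * (n + m + 1)).choose (2 * m + 1) : ℚ)
    - ((n + m + 1).choose n : ℚ) * ((2 * (n + m + 1)).choose (2 * m) : ℚ) := by
  have h := congrArg (fun p => Polynomial.coeff p (n + 1)) (poly_eq (n + m))
  simp only [Polynomial.coeff_C_mul, Polynomial.coeff_X_mul, Polynomial.coeff_sub, coeff_Ds] at h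
  rw [h, qpoly_coeff _ _ _ (by omega) (by omega), qpoly_coeff _ _ _ (by omega) (by omega)]
  rw [show 2 * (n + m) + 3 - 2 * (n + 1) = 2 * m + 1 by omega,
    show 2 * (n + m) - 2 * n = 2 * m by omega]

theorem prod_fact (a n : ℕ) : (∏ i ∈ Finset.Icc 1 n, (a + i)) * a.factorial = (a + n).factorial := by
  induction n with
  | zero => simp
  | succ n ih =>
    rw [Finset.prod_Icc_succ_top (by omega), ← add_assoc, Nat.factorial_succ, ← ih]
    ring

theorem final_alg (n m W : ℕ) (h : ((n + m + 1 : ℕ) : ℚ) * (W : ℚ) =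
    ((n + m + 1).choose (n + 1) : ℚ) * ((2 * (n + m + 1)).choose (2 * m + 1) : ℚ)
    - ((n + m + 1).choose n : ℚ) * ((2 * (n + m + 1)).choose (2 * m) : ℚ)) :
    W * ((n + 1).factorial * (2 * n + 1).factorial)
      = (∏ i ∈ Finset.Icc 1 n, (m + 1 + i)) *
        (∏ i ∈ Finset.Icc 1 (2 * n), (2 * m + i + 1)) := by
  have p1 := prod_fact (m + 1) n
  have p2 := prod_fact (2 * m + 1) (2 * n)
  have e2 : ∀ i, 2 * m + 1 + i = 2 * m + i + 1 := fun i => by ring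
  simp only [e2] at p2
  generalize (∏ i ∈ Finset.Icc 1 n, (m + 1 + i)) = Q1 at *
  generalize (∏ i ∈ Finset.Icc 1 (2 * n), (2 * m + i + 1)) = Q2 at *
  rw [Nat.cast_choose ℚ (show n + 1 ≤ n + m + 1 by omega),
    Nat.cast_choose ℚ (show n ≤ n + m + 1 by omega),
    Nat.cast_choose ℚ (show 2 * m + 1 ≤ 2 * (n + m + 1) by omega),
    Nat.cast_choose ℚ (show 2 * m ≤ 2 * (n + m + 1) by omega),
    show n + m + 1 - (n + 1) = m by omega, show n + m + 1 - n = m + 1 by omega,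
    show 2 * (n + m + 1) - (2 * m + 1) = 2 * n + 1 by omega,
    show 2 * (n + m + 1) - 2 * m = 2 * n + 1 + 1 by omega,
    show 2 * (n + m + 1) = 2 * m + 2 * n + 1 + 1 by ring,
    Nat.factorial_succ (2 * m + 2 * n + 1), Nat.factorial_succ (2 * n + 1), ← p2,
    show n + m + 1 = m + 1 + n by ring, ← p1, Nat.factorial_succ (2 * m), Nat.factorial_succ n,
    Nat.factorial_succ m] at h
  rw [Nat.factorial_succ n]
  have f1 : (n.factorial : ℚ) ≠ 0 := Nat.cast_ne_zero.2 (Nat.factorial_ne_zero _)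
  have f2 : (m.factorial : ℚ) ≠ 0 := Nat.cast_ne_zero.2 (Nat.factorial_ne_zero _)
  have f3 : ((2 * m).factorial : ℚ) ≠ 0 := Nat.cast_ne_zero.2 (Nat.factorial_ne_zero _)
  have f4 : ((2 * n + 1).factorial : ℚ) ≠ 0 := Nat.cast_ne_zero.2 (Nat.factorial_ne_zero _)
  have f5 : (m + 1 + n : ℚ) ≠ 0 := by positivity
  have f6 : (2 * m + 1 : ℚ) ≠ 0 := by positivity
  have f7 : (m + 1 : ℚ) ≠ 0 := by positivity
  have f8 : (n + 1 : ℚ) ≠ 0 := by positivity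
  have f9 : (2 * n + 1 + 1 : ℚ) ≠ 0 := by positivity
  have key : (W * ((n + 1) * n.factorial * (2 * n + 1).factorial) : ℚ) = Q1 * Q2 := by
    push_cast at h
    apply mul_left_cancel₀ f5
    have : ((m + 1 + n) * (W * ((n + 1) * n.factorial * (2 * n + 1).factorial)) : ℚ) =
      ((m + 1 + n) * W) * ((n + 1) * n.factorial * (2 * n + 1).factorial) := by ring
    rw [this, h]
    field_simp
    ring
  exact_mod_cast key
end KN

namespace KN

theorem mono_row {n m : ℕ} (π : VP × Fin n → Fin (m + 1)) (h : Monotone π) (v : VP) :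
    Monotone fun i => π (v, i) := by
  intro i j hij
  exact h ⟨le_refl v, hij⟩

theorem trip_mem {n m : ℕ} (π : VP × Fin n → Fin (m + 1)) (h : Monotone π) :
    ((im fun i => π (VP.a, i)), (im fun i => π (VP.b, i)), (im fun i => π (VP.c, i)))
      ∈ trip (n + m) n := by
  rw [trip, Finset.mem_filter, Finset.mem_product, Finset.mem_product]
  refine ⟨⟨?_, ?_, ?_⟩, ?_, im_card (mono_row π h _), im_card (mono_row π h _),
    im_card (mono_row π h _)⟩
  · exact Finset.mem_powerset.2 (im_subset _)
  · exact Finset.mem_powerset.2 (im_subset _)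
  · exact Finset.mem_powerset.2 (im_subset _)
  · intro k hk
    refine ⟨(dom_iff (mono_row π h _) (mono_row π h _)).1 (fun i => ?_) k hk,
      (dom_iff (mono_row π h _) (mono_row π h _)).1 (fun i => ?_) k hk⟩
    · exact h ⟨Or.inr rfl, le_refl i⟩
    · exact h ⟨Or.inr rfl, le_refl i⟩

end KN

/-- The Kreweras–Niederhausen order polynomial product formula: the number of weakly
order-preserving maps `V(n) → {0, 1, …, m}` equals
`(∏_{i=1}^{n} (m+1+i) * ∏_{i=1}^{2n} (2m+i+1)) / ((n+1)! * (2n+1)!)`,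
stated multiplicatively. -/
theorem order_polynomial_Vn (n m : ℕ) (hn : 1 ≤ n) :
    Nat.card {π : VP × Fin n → Fin (m + 1) // Monotone π} *
        ((n + 1).factorial * (2 * n + 1).factorial)
      = (∏ i ∈ Finset.Icc 1 n, (m + 1 + i)) *
        (∏ i ∈ Finset.Icc 1 (2 * n), (2 * m + i + 1)) := by
  apply KN.final_alg
  rw [← KN.trip_card]
  congr 2
  let G : {π : VP × Fin n → Fin (m + 1) // Monotone π} → {t // t ∈ KN.trip (n + m) n} :=
    fun π => ⟨(KN.im fun i => π.1 (VP.a, i), KN.im fun i => π.1 (VP.b, i),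
      KN.im fun i => π.1 (VP.c, i)), KN.trip_mem π.1 π.2⟩
  rw [Nat.card_congr (Equiv.ofBijective G ⟨?_, ?_⟩), Nat.card_eq_fintype_card, Fintype.card_coe]
  · intro π ρ h
    have h1 := congrArg Subtype.val h
    have ha := congrArg Prod.fst h1
    have hb := congrArg (fun t => t.2.1) h1
    have hc := congrArg (fun t => t.2.2) h1
    apply Subtype.ext
    funext ⟨v, i⟩
    cases v
    · exact congrFun (KN.im_inj (KN.mono_row π.1 π.2 _) (KN.mono_row ρ.1 ρ.2 _) ha) i
    · exact congrFun (KN.im_inj (KN.mono_row π.1 π.2 _) (KN.mono_row ρ.1 ρ.2 _) hb) i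
    · exact congrFun (KN.im_inj (KN.mono_row π.1 π.2 _) (KN.mono_row ρ.1 ρ.2 _) hc) i
  · rintro ⟨⟨sa, sb, sc⟩, ht⟩
    have ht' := ht
    rw [KN.trip, Finset.mem_filter, Finset.mem_product, Finset.mem_product] at ht'
    obtain ⟨⟨ha, hb, hc⟩, hv, ca, cb, cc⟩ := ht'
    simp only [Finset.mem_powerset] at ha hb hc hv ca cb cc
    obtain ⟨f, hf, rfl⟩ := KN.im_surj sa ha ca
    obtain ⟨g, hg, rfl⟩ := KN.im_surj sb hb cb
    obtain ⟨h, hh, rfl⟩ := KN.im_surj sc hc cc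
    have hfg := (KN.dom_iff hf hg).2 fun k hk => (hv k hk).1
    have hfh := (KN.dom_iff hf hh).2 fun k hk => (hv k hk).2
    refine ⟨⟨fun p => match p.1 with
      | VP.a => f p.2
      | VP.b => g p.2
      | VP.c => h p.2, ?_⟩, rfl⟩
    rintro ⟨v, i⟩ ⟨w, j⟩ ⟨hvw, hij⟩
    rcases hvw with hvw | hvw
    · simp only at hvw
      subst hvw
      cases v
      · exact hf hij
      · exact hg hij
      · exact hh hij
    · simp only at hvw
      subst hvw
      cases w
      · exact hf hij
      · exact (hfg i).trans (hg hij)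
      · exact (hfh i).trans (hh hij)
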